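/- There is a first-order formula φ_Bit(x,y) over the language with binary relation symbols for < and ◁ and unary relation symbols for C and Q such that for every n ∈ ℕ and all a,b ∈ {0,...,n}, the finite prefix structure ({0,...,n}, <, ◁, C, Q) satisfies φ_Bit(a,b) iff Bit(a,b) holds, i.e. iff bit b of the binary representation of a is 1. Together with the definability of <, ◁, C, Q from Bit in every finite prefix, this shows FO(<,◁,C,Q) and FO(Bit) define exactly the same relations in every finite prefix. -/

import Mathlib

open FirstOrder Language

/-- `q_i = i(i+1)/2`, the smallest element of column `i`. -/
def qseq (i : ℕ) : ℕ := i * (i + 1) / 2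

/-- `c(x)`, the column number of `x`: the largest `i` with `q_i ≤ x`. -/
def col (x : ℕ) : ℕ := Nat.findGreatest (fun i => qseq i ≤ x) x

/-- `q(x) = q_{c(x)}`, the bottom-most element of the column of `x`. -/
def qf (x : ℕ) : ℕ := qseq (col x)

/-- `r(x) = x - q(x)`, the row number of `x`. -/
def rowf (x : ℕ) : ℕ := x - qf x

/-- The row-major linear order `◁`. -/
def ordc (x y : ℕ) : Prop := rowf x < rowf y ∨ (rowf x = rowf y ∧ col x < col y)

/-- The unary predicate `C`: bit `r(x)` of `c(x)+1` is 1. -/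
def Cpred (x : ℕ) : Prop := Nat.testBit (col x + 1) (rowf x) = true

/-- The unary predicate `Q`: bit `r(x)` of `q_{c(x)+1}` is 1. -/
def Qpred (x : ℕ) : Prop := Nat.testBit (qseq (col x + 1)) (rowf x) = true

/-- Relation symbols of the language with binary `<`, `◁` and unary `C`, `Q`. -/
inductive Rel4 : ℕ → Type
  | lt : Rel4 2
  | ordc : Rel4 2
  | C : Rel4 1
  | Q : Rel4 1

/-- The language with binary relation symbols for `<` and `◁` and unary `C`, `Q`. -/
def L4 : Language := ⟨fun _ => Empty, Rel4⟩

/-- The finite prefix structure `({0,...,n}, <, ◁, C, Q)`. -/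
def struct4 (n : ℕ) : L4.Structure (Fin (n + 1)) where
  funMap := fun f _ => f.elim
  RelMap := fun r v =>
    match r with
    | .lt => (v 0 : ℕ) < (v 1 : ℕ)
    | .ordc => ordc (v 0 : ℕ) (v 1 : ℕ)
    | .C => Cpred (v 0 : ℕ)
    | .Q => Qpred (v 0 : ℕ)

/-!
First-order formulas over `<` and `◁` compare the columns and the rows of two elements and recognise
the diagonal `r(x) = c(x)`. The predicates `C` and `Q` spell out, column by column, the binary
expansions of the numbers `c(x)` and `q(x)`, and the diagonal turns bits of columns into bits of
rows. Since `x = q(x) + r(x)`, carry look-ahead addition then defines the bits of `x`, with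
positions named by rows. To name a position by an element `b` instead, look for the diagonal element
`d` in column `b`, recognised by the fact that `c(d)` and `b` have the same bits at all rows of the
prefix. There are enough rows for this as soon as `q_4 = 10` belongs to the prefix, and for `a < 10`
only finitely many pairs satisfy `Bit(a, b)`.
-/

section Coordinates

theorem qseq_succ (i : ℕ) : qseq (i + 1) = qseq i + (i + 1) := by
  simpa [qseq, mul_comm] using Nat.triangle_succ (i + 1)

theorem qseq_strictMono : StrictMono qseq :=
  strictMono_nat_of_lt_succ fun i => by rw [qseq_succ]; omega

theorem gc_qseq_col : GaloisConnection qseq col := fun i x => by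
  refine ⟨fun h => Nat.le_findGreatest (qseq_strictMono.le_apply.trans h) h, fun h => ?_⟩
  exact (qseq_strictMono.monotone h).trans
    (Nat.findGreatest_spec (P := fun i => qseq i ≤ x) (Nat.zero_le x) (Nat.zero_le x))

theorem qf_le (x : ℕ) : qf x ≤ x :=
  gc_qseq_col.l_u_le x

theorem lt_qseq_succ_col (x : ℕ) : x < qseq (col x + 1) :=
  gc_qseq_col.lt_iff_lt.2 (lt_add_one _)

theorem qf_add_rowf (x : ℕ) : qf x + rowf x = x :=
  Nat.add_sub_of_le (qf_le x)

theorem rowf_le_col (x : ℕ) : rowf x ≤ col x := by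
  have h := lt_qseq_succ_col x
  rw [qseq_succ] at h
  have : qseq (col x) + rowf x = x := qf_add_rowf x
  omega

theorem col_qseq_add {c r : ℕ} (h : r ≤ c) : col (qseq c + r) = c := by
  refine le_antisymm (Nat.lt_succ_iff.1 (gc_qseq_col.lt_iff_lt.1 ?_)) (gc_qseq_col.le_u (by omega))
  rw [qseq_succ]
  omega

theorem rowf_qseq_add {c r : ℕ} (h : r ≤ c) : rowf (qseq c + r) = r := by
  rw [rowf, qf, col_qseq_add h, Nat.add_sub_cancel_left]

theorem lt_of_col_lt_col {x y : ℕ} (h : col x < col y) : x < y :=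
  gc_qseq_col.monotone_u.reflect_lt h

theorem lt_iff_col_lt_or_rowf_lt (x y : ℕ) :
    x < y ↔ col x < col y ∨ col x = col y ∧ rowf x < rowf y := by
  rcases lt_trichotomy (col x) (col y) with h | h | h
  · simp [h, lt_of_col_lt_col h]
  · have hq : qf x = qf y := congrArg qseq h
    have hx := qf_add_rowf x
    have hy := qf_add_rowf y
    omega
  · have := lt_of_col_lt_col h
    omega

theorem qseq_add_lt_of_lt_col {c r x : ℕ} (hr : r ≤ c) (h : c < col x) : qseq c + r < x :=
  lt_of_col_lt_col ((col_qseq_add hr).trans_lt h)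

theorem col_and_rowf_of_rowf_add_one_ne_zero {x : ℕ} (h : rowf (x + 1) ≠ 0) :
    col (x + 1) = col x ∧ rowf (x + 1) = rowf x + 1 := by
  have hr := rowf_le_col (x + 1)
  have hx : x = qseq (col (x + 1)) + (rowf (x + 1) - 1) := by
    have : qseq (col (x + 1)) + rowf (x + 1) = x + 1 := qf_add_rowf (x + 1)
    omega
  have hc := col_qseq_add (c := col (x + 1)) (r := rowf (x + 1) - 1) (by omega)
  have hr' := rowf_qseq_add (c := col (x + 1)) (r := rowf (x + 1) - 1) (by omega)
  rw [← hx] at hc hr'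
  omega

theorem qseq_lt_two_pow (c : ℕ) : qseq c < 2 ^ c := by
  induction c with
  | zero => decide
  | succ c ih =>
    have := c.lt_two_pow_self
    rw [qseq_succ, pow_succ]
    omega

theorem qseq_succ_le_two_pow {m : ℕ} (h : 4 ≤ m) : qseq (m + 1) ≤ 2 ^ m := by
  induction m, h using Nat.le_induction with
  | base => decide
  | succ m hm ih =>
    have : m ≤ qseq m := qseq_strictMono.le_apply
    have := qseq_succ m
    rw [qseq_succ, pow_succ]
    omega

end Coordinates

section LowerSet

variable {X : Type*} {f : X → ℕ}

theorem add_one_eq_iff_of_isLowerSet_range (hf : IsLowerSet (Set.range f)) {x y : X} :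
    f x + 1 = f y ↔ f x < f y ∧ ¬ ∃ z, f x < f z ∧ f z < f y := by
  refine ⟨fun h => ⟨by omega, fun ⟨_, _, _⟩ => by omega⟩, fun ⟨hxy, hno⟩ => ?_⟩
  obtain ⟨z, hz⟩ := hf (Nat.succ_le_of_lt hxy) ⟨y, rfl⟩
  by_contra hne
  exact hno ⟨z, by omega, by omega⟩

theorem exists_lt_iff_of_isLowerSet_range (hf : IsLowerSet (Set.range f)) {p : ℕ → Prop} {y : X} :
    (∃ k < f y, p k) ↔ ∃ z, f z < f y ∧ p (f z) := by
  refine ⟨fun ⟨k, hk, hp⟩ => ?_, fun ⟨z, hz, hp⟩ => ⟨f z, hz, hp⟩⟩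
  obtain ⟨z, rfl⟩ := hf hk.le ⟨y, rfl⟩
  exact ⟨z, hk, hp⟩

theorem forall_lt_iff_of_isLowerSet_range (hf : IsLowerSet (Set.range f)) {p : ℕ → Prop} {y : X} :
    (∀ k < f y, p k) ↔ ∀ z, f z < f y → p (f z) := by
  simpa using not_congr (exists_lt_iff_of_isLowerSet_range hf (p := fun k => ¬ p k) (y := y))

end LowerSet

section Carry

theorem carry_false_eq_true_iff {w : ℕ} (x y : BitVec w) (i : ℕ) :
    BitVec.carry i x y false ↔
      ∃ j < i, (x.getLsbD j ∧ y.getLsbD j) ∧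
        ∀ k < i, j < k → x.getLsbD k ∨ y.getLsbD k := by
  induction i with
  | zero => simp
  | succ i ih =>
    have hmaj : BitVec.carry (i + 1) x y false ↔ (x.getLsbD i ∧ y.getLsbD i) ∨
        (x.getLsbD i ∨ y.getLsbD i) ∧ BitVec.carry i x y false := by
      rw [BitVec.carry_succ, Bool.atLeastTwo]
      grind
    rw [hmaj, ih]
    constructor
    · rintro (hi | ⟨hi, j, hj, hxy, h⟩)
      · exact ⟨i, i.lt_succ_self, hi, by omega⟩
      · refine ⟨j, by omega, hxy, fun k hk hjk => ?_⟩
        rcases Nat.lt_succ_iff_lt_or_eq.1 hk with hki | rfl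
        exacts [h k hki hjk, hi]
    · rintro ⟨j, hj, hxy, h⟩
      rcases Nat.lt_succ_iff_lt_or_eq.1 hj with hji | rfl
      · exact .inr ⟨h i i.lt_succ_self hji, j, hji, hxy, fun k hk => h k (by omega)⟩
      · exact .inl hxy

theorem testBit_add_iff (x y i : ℕ) :
    (x + y).testBit i ↔ ((x.testBit i ↔ y.testBit i) ↔
      ∃ j < i, (x.testBit j ∧ y.testBit j) ∧
        ∀ k < i, j < k → x.testBit k ∨ y.testBit k) := by
  have hbit (z : ℕ) {k : ℕ} (hk : k ≤ i) : (BitVec.ofNat (i + 1) z).getLsbD k = z.testBit k := by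
    rw [BitVec.getLsbD_ofNat, decide_eq_true (Nat.lt_succ_of_le hk), Bool.true_and]
  have hcarry : BitVec.carry i (BitVec.ofNat (i + 1) x) (BitVec.ofNat (i + 1) y) false ↔
      ∃ j < i, (x.testBit j ∧ y.testBit j) ∧
        ∀ k < i, j < k → x.testBit k ∨ y.testBit k := by
    rw [carry_false_eq_true_iff]
    refine exists_congr fun j => and_congr_right fun hj => ?_
    rw [hbit x hj.le, hbit y hj.le]
    refine and_congr_right fun _ => forall₂_congr fun k hk => ?_
    rw [hbit x hk.le, hbit y hk.le]
  rw [← hcarry, ← hbit (x + y) le_rfl, BitVec.ofNat_add, BitVec.getLsbD_add i.lt_succ_self,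
    hbit x le_rfl, hbit y le_rfl]
  grind

end Carry

section Prefix

variable {n : ℕ}

theorem exists_fin_col_rowf {c r : ℕ} (hr : r ≤ c) (h : qseq c + r ≤ n) :
    ∃ z : Fin (n + 1), col z = c ∧ rowf z = r :=
  ⟨⟨qseq c + r, by omega⟩, col_qseq_add hr, rowf_qseq_add hr⟩

theorem isLowerSet_range_val : IsLowerSet (Set.range (Fin.val : Fin (n + 1) → ℕ)) := by
  rintro _ k hk ⟨x, rfl⟩
  exact ⟨⟨k, by omega⟩, rfl⟩

theorem isLowerSet_range_col : IsLowerSet (Set.range fun x : Fin (n + 1) => col x) := by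
  rintro _ k hk ⟨x, rfl⟩
  have hx : qseq k ≤ x := gc_qseq_col.l_le hk
  obtain ⟨z, hz, -⟩ := exists_fin_col_rowf (n := n) k.zero_le (by omega)
  exact ⟨z, hz⟩

theorem isLowerSet_range_rowf : IsLowerSet (Set.range fun x : Fin (n + 1) => rowf x) := by
  rintro _ k hk ⟨x, rfl⟩
  have hr : k ≤ rowf x := hk
  have : qseq (col x) + rowf x = x := qf_add_rowf x
  obtain ⟨z, -, hz⟩ := exists_fin_col_rowf (n := n) (hr.trans (rowf_le_col x)) (by omega)
  exact ⟨z, hz⟩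

theorem exists_fin_diag_of_lt_col {k : ℕ} (h : k < col n) :
    ∃ d : Fin (n + 1), col d = k ∧ rowf d = k :=
  exists_fin_col_rowf le_rfl (qseq_add_lt_of_lt_col le_rfl h).le

theorem exists_fin_diag_rowf (x : Fin (n + 1)) :
    ∃ d : Fin (n + 1), col d = rowf x ∧ rowf d = rowf x := by
  have hq := qseq_strictMono.monotone (rowf_le_col x)
  have : qseq (col x) + rowf x = x := qf_add_rowf x
  exact exists_fin_col_rowf le_rfl (by omega)

theorem rowf_eq_zero_iff (x : Fin (n + 1)) :
    rowf x = 0 ↔ ∀ z : Fin (n + 1), (z : ℕ) = 2 → ordc x z := by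
  -- The element `2` is the `◁`-least one outside row `0`.
  have hcol : col 2 = 1 := col_qseq_add (c := 1) le_rfl
  have hrow : rowf 2 = 1 := rowf_qseq_add (c := 1) le_rfl
  have hx := rowf_le_col x
  constructor
  · intro h z hz
    simp [ordc, hz, hrow, h]
  · intro h
    rcases lt_or_ge (x : ℕ) 2 with hx2 | hx2
    · rw [lt_iff_col_lt_or_rowf_lt, hcol, hrow] at hx2
      omega
    · have := h ⟨2, by omega⟩ rfl
      simp only [ordc, hcol, hrow] at this
      omega

theorem col_lt_col_iff (x y : Fin (n + 1)) :
    col x < col y ↔ ∃ z : Fin (n + 1), rowf z = 0 ∧ (x : ℕ) < z ∧ ¬ (y : ℕ) < z := by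
  constructor
  · intro h
    obtain ⟨z, hz, hz'⟩ := exists_fin_col_rowf (n := n) (col y).zero_le (by
      have : qseq (col y) ≤ y := qf_le y
      omega)
    refine ⟨z, hz', ?_⟩
    rw [lt_iff_col_lt_or_rowf_lt x, lt_iff_col_lt_or_rowf_lt y]
    omega
  · rintro ⟨z, hz, hxz, hyz⟩
    rw [lt_iff_col_lt_or_rowf_lt] at hxz hyz
    omega

theorem rowf_lt_rowf_iff (x y : Fin (n + 1)) :
    rowf x < rowf y ↔ ordc x y ∧
      (col x < col y → rowf y ≠ 0 ∧ ∃ z : Fin (n + 1), (z : ℕ) + 1 = y ∧ ordc x z) := by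
  unfold ordc
  constructor
  · refine fun h => ⟨.inl h, fun hc => ⟨by omega, ?_⟩⟩
    have hy := qf_add_rowf y
    obtain ⟨z, hz⟩ : ∃ z, (y : ℕ) = z + 1 := Nat.exists_eq_add_one.2 (by omega)
    have := col_and_rowf_of_rowf_add_one_ne_zero (x := z) (by rw [← hz]; omega)
    rw [← hz] at this
    exact ⟨⟨z, by omega⟩, hz.symm, by dsimp only; omega⟩
  · rintro ⟨hxy, h⟩
    by_cases hc : col x < col y
    · obtain ⟨hy, z, hz, hxz⟩ := h hc
      have := col_and_rowf_of_rowf_add_one_ne_zero (x := z) (by rwa [hz])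
      rw [hz] at this
      omega
    · omega

theorem rowf_eq_col_iff (x : Fin (n + 1)) :
    rowf x = col x ↔ ¬ ∃ z : Fin (n + 1), col z < col x ∧ rowf z = rowf x := by
  constructor
  · rintro h ⟨z, hc, hr⟩
    have := rowf_le_col z
    omega
  · intro h
    obtain ⟨d, hc, hr⟩ := exists_fin_diag_rowf x
    by_contra hne
    have := rowf_le_col x
    exact h ⟨d, by omega, hr⟩

theorem testBit_col_iff {f : ℕ → ℕ} (hf : ∀ c, f c < 2 ^ c) (x y : Fin (n + 1)) :
    (f (col x)).testBit (rowf y) ↔ ∃ z : Fin (n + 1),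
      col z + 1 = col x ∧ rowf z = rowf y ∧ (f (col z + 1)).testBit (rowf z) := by
  constructor
  · intro h
    have hlt : rowf y < col x :=
      (Nat.pow_lt_pow_iff_right one_lt_two).1 ((Nat.ge_two_pow_of_testBit h).trans_lt (hf _))
    obtain ⟨c, hc⟩ : ∃ c, col x = c + 1 := Nat.exists_eq_add_one.2 (by omega)
    have hle : qseq c + rowf y < x := qseq_add_lt_of_lt_col (by omega) (by omega)
    obtain ⟨z, rfl, hzr⟩ :=
      exists_fin_col_rowf (n := n) (Nat.le_of_lt_succ (hlt.trans_eq hc)) (by omega)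
    exact ⟨z, hc.symm, hzr, by rwa [← hc, hzr]⟩
  · rintro ⟨z, hc, hr, h⟩
    rwa [hc, hr] at h

theorem testBit_rowf_iff (x y : Fin (n + 1)) :
    (rowf x).testBit (rowf y) ↔ ∃ d : Fin (n + 1),
      rowf d = col d ∧ rowf d = rowf x ∧ (col d).testBit (rowf y) := by
  constructor
  · intro h
    obtain ⟨d, hc, hr⟩ := exists_fin_diag_rowf x
    exact ⟨d, hr.trans hc.symm, hr, by rwa [hc]⟩
  · rintro ⟨d, hd, hr, h⟩
    rwa [← hd, hr] at h

theorem testBit_add_rowf_iff (a b : ℕ) (y : Fin (n + 1)) :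
    (a + b).testBit (rowf y) ↔ ((a.testBit (rowf y) ↔ b.testBit (rowf y)) ↔
      ∃ z : Fin (n + 1), rowf z < rowf y ∧ (a.testBit (rowf z) ∧ b.testBit (rowf z)) ∧
        ∀ w : Fin (n + 1), rowf w < rowf y → rowf z < rowf w →
          a.testBit (rowf w) ∨ b.testBit (rowf w)) := by
  rw [testBit_add_iff, exists_lt_iff_of_isLowerSet_range isLowerSet_range_rowf]
  simp only [forall_lt_iff_of_isLowerSet_range isLowerSet_range_rowf]

theorem lt_two_pow_col (hn : qseq 4 ≤ n) : n < 2 ^ col n :=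
  (lt_qseq_succ_col n).trans_le (qseq_succ_le_two_pow (gc_qseq_col.le_u hn))

theorem eq_iff_forall_testBit_rowf (hn : qseq 4 ≤ n) {a b : ℕ} (ha : a ≤ n) (hb : b ≤ n) :
    a = b ↔ ∀ z : Fin (n + 1), a.testBit (rowf z) ↔ b.testBit (rowf z) := by
  refine ⟨by rintro rfl z; rfl, fun h => Nat.eq_of_testBit_eq fun k => ?_⟩
  rcases lt_or_ge k (col n) with hk | hk
  · obtain ⟨z, -, rfl⟩ := exists_fin_diag_of_lt_col hk
    exact Bool.eq_iff_iff.2 (h z)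
  · have hlt : n < 2 ^ k := (lt_two_pow_col hn).trans_le (Nat.pow_le_pow_right two_pos hk)
    rw [Nat.testBit_lt_two_pow (ha.trans_lt hlt), Nat.testBit_lt_two_pow (hb.trans_lt hlt)]

theorem qseq_add_le_of_testBit {a b : ℕ} (ha : qseq 4 ≤ a) (h : a.testBit b) :
    qseq b + b ≤ a := by
  have hs := qseq_succ b
  rcases lt_or_ge b 4 with hb | hb
  · have := qseq_strictMono.monotone (Nat.add_one_le_of_lt hb)
    omega
  · have := qseq_succ_le_two_pow hb
    have := Nat.ge_two_pow_of_testBit h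
    omega

theorem testBit_iff_exists_diag {a b : Fin (n + 1)} (ha : qseq 4 ≤ a) :
    (a : ℕ).testBit b ↔ ∃ d : Fin (n + 1), rowf d = col d ∧
      (∀ z : Fin (n + 1), (col d).testBit (rowf z) ↔ (b : ℕ).testBit (rowf z)) ∧
      (a : ℕ).testBit (rowf d) := by
  have hcol (d : Fin (n + 1)) : col d = b ↔
      ∀ z : Fin (n + 1), (col d).testBit (rowf z) ↔ (b : ℕ).testBit (rowf z) := by
    have : col d ≤ d := qseq_strictMono.le_apply.trans (qf_le d)
    exact eq_iff_forall_testBit_rowf (by omega) (by omega) (by omega)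
  simp only [← hcol]
  constructor
  · intro h
    have := qseq_add_le_of_testBit ha h
    obtain ⟨d, hc, hr⟩ := exists_fin_col_rowf (n := n) (le_refl (b : ℕ)) (by omega)
    exact ⟨d, hr.trans hc.symm, hc, by rwa [hr]⟩
  · rintro ⟨d, hd, hc, h⟩
    rwa [hd, hc] at h

end Prefix

theorem finite_setOf_lt_and_testBit (k : ℕ) : {p : ℕ × ℕ | p.1 < k ∧ p.1.testBit p.2}.Finite := by
  refine ((Set.finite_Iio k).prod (Set.finite_Iio k)).subset ?_
  rintro ⟨a, b⟩ ⟨ha, h⟩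
  exact ⟨ha, (b.lt_two_pow_self.trans_le (Nat.ge_two_pow_of_testBit h)).trans ha⟩

/-- A family of relations `R i` on the structures `M i`, in variables indexed by `α`, is uniformly
definable if one and the same `L`-formula defines all of them. -/
def UniformlyDefinable (L : Language) {ι : Type*} (M : ι → Type*) [∀ i, L.Structure (M i)]
    {α : Type*} (R : ∀ i, (α → M i) → Prop) : Prop :=
  ∃ φ : L.Formula α, ∀ i v, φ.Realize v ↔ R i v

namespace UniformlyDefinable

variable {L : Language} {ι : Type*} {M : ι → Type*} [∀ i, L.Structure (M i)] {α : Type*}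
  {R S : ∀ i, (α → M i) → Prop}

theorem of_iff (e : ∀ i v, S i v ↔ R i v) (h : UniformlyDefinable L M R) :
    UniformlyDefinable L M S :=
  h.imp fun _ hφ i v => (hφ i v).trans (e i v).symm

protected theorem not (h : UniformlyDefinable L M R) :
    UniformlyDefinable L M fun i v => ¬ R i v := by
  obtain ⟨φ, hφ⟩ := h
  exact ⟨φ.not, fun i v => Formula.realize_not.trans (not_congr (hφ i v))⟩

protected theorem and (hR : UniformlyDefinable L M R) (hS : UniformlyDefinable L M S) :
    UniformlyDefinable L M fun i v => R i v ∧ S i v := by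
  obtain ⟨φ, hφ⟩ := hR
  obtain ⟨ψ, hψ⟩ := hS
  exact ⟨φ ⊓ ψ, fun i v => Formula.realize_inf.trans (and_congr (hφ i v) (hψ i v))⟩

protected theorem or (hR : UniformlyDefinable L M R) (hS : UniformlyDefinable L M S) :
    UniformlyDefinable L M fun i v => R i v ∨ S i v := by
  obtain ⟨φ, hφ⟩ := hR
  obtain ⟨ψ, hψ⟩ := hS
  exact ⟨φ ⊔ ψ, fun i v => Formula.realize_sup.trans (or_congr (hφ i v) (hψ i v))⟩

protected theorem imp (hR : UniformlyDefinable L M R) (hS : UniformlyDefinable L M S) :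
    UniformlyDefinable L M fun i v => R i v → S i v := by
  obtain ⟨φ, hφ⟩ := hR
  obtain ⟨ψ, hψ⟩ := hS
  exact ⟨φ.imp ψ, fun i v => Formula.realize_imp.trans (imp_congr (hφ i v) (hψ i v))⟩

protected theorem iff (hR : UniformlyDefinable L M R) (hS : UniformlyDefinable L M S) :
    UniformlyDefinable L M fun i v => R i v ↔ S i v := by
  obtain ⟨φ, hφ⟩ := hR
  obtain ⟨ψ, hψ⟩ := hS
  exact ⟨φ.iff ψ, fun i v => Formula.realize_iff.trans (iff_congr (hφ i v) (hψ i v))⟩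

theorem ex {T : ∀ i, (α → M i) → M i → Prop}
    (h : UniformlyDefinable L M (α := α ⊕ Unit)
      fun i v => T i (fun a => v (Sum.inl a)) (v (Sum.inr ()))) :
    UniformlyDefinable L M fun i v => ∃ x, T i v x := by
  obtain ⟨φ, hφ⟩ := h
  refine ⟨φ.iExs Unit, fun i v => ?_⟩
  rw [Formula.realize_iExs, (Equiv.funUnique Unit (M i)).exists_congr_left]
  exact exists_congr fun x => hφ i _

theorem all {T : ∀ i, (α → M i) → M i → Prop}
    (h : UniformlyDefinable L M (α := α ⊕ Unit)
      fun i v => T i (fun a => v (Sum.inl a)) (v (Sum.inr ()))) :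
    UniformlyDefinable L M fun i v => ∀ x, T i v x :=
  .of_iff (fun _ _ => not_exists_not.symm) (ex (T := fun i v x => ¬ T i v x) h.not).not

theorem exists_of_finite {β : Type*} [Finite β] {T : β → ∀ i, (α → M i) → Prop}
    (h : ∀ b, UniformlyDefinable L M (T b)) :
    UniformlyDefinable L M fun i v => ∃ b, T b i v := by
  choose φ hφ using h
  exact ⟨Formula.iSup φ, fun i v => Formula.realize_iSup.trans (exists_congr fun b => hφ b i v)⟩

theorem relMap {k : ℕ} (r : L.Relations k) (t : Fin k → α) :
    UniformlyDefinable L M fun _ v => Structure.RelMap r (v ∘ t) :=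
  ⟨r.formula (Term.var ∘ t), fun _ _ => Formula.realize_rel⟩

end UniformlyDefinable

local instance (n : ℕ) : L4.Structure (Fin (n + 1)) := struct4 n

/-- Uniform definability over the finite prefix structures `({0,...,n}, <, ◁, C, Q)`. -/
abbrev PrefixDefinable {α : Type*} (R : ∀ n : ℕ, (α → Fin (n + 1)) → Prop) : Prop :=
  UniformlyDefinable L4 (fun n => Fin (n + 1)) R

/-- The bits of `f x` are definable, where the position of a bit is given as the row of an element,
so that only the positions occurring as rows in the prefix are considered. -/
def RowBitDefinable (f : ℕ → ℕ) : Prop :=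
  ∀ ⦃α : Type⦄ (i j : α), PrefixDefinable fun _ v => (f (v i)).testBit (rowf (v j))

namespace PrefixDefinable

open UniformlyDefinable

section Order

variable {α : Type*} (i j : α)

theorem lt : PrefixDefinable fun _ v => (v i : ℕ) < v j :=
  relMap (L := L4) Rel4.lt ![i, j]

theorem ordc : PrefixDefinable fun _ v => _root_.ordc (v i) (v j) :=
  relMap (L := L4) Rel4.ordc ![i, j]

theorem cpred : PrefixDefinable fun _ v => Cpred (v i) :=
  relMap (L := L4) Rel4.C ![i]

theorem qpred : PrefixDefinable fun _ v => Qpred (v i) :=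
  relMap (L := L4) Rel4.Q ![i]

theorem const_le (k : ℕ) : PrefixDefinable fun _ v => k ≤ (v i : ℕ) := by
  induction k generalizing α with
  | zero => exact .of_iff (fun n v => by simp) (lt i i).not
  | succ k ih =>
    have hexists (n : ℕ) (x : Fin (n + 1)) :
        k + 1 ≤ (x : ℕ) ↔ ∃ z : Fin (n + 1), k ≤ (z : ℕ) ∧ (z : ℕ) < x :=
      ⟨fun h => ⟨⟨k, by omega⟩, le_rfl, h⟩, fun ⟨_, _, _⟩ => by omega⟩
    exact .of_iff (fun n v => hexists n (v i)) (ex ((ih _).and (lt _ _)))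

theorem eq_const (k : ℕ) : PrefixDefinable fun _ v => (v i : ℕ) = k :=
  .of_iff (fun n v => by omega) ((const_le i k).and (const_le i (k + 1)).not)

theorem mem_of_finite {s : Set (ℕ × ℕ)} (hs : s.Finite) :
    PrefixDefinable fun _ v => ((v i : ℕ), (v j : ℕ)) ∈ s := by
  have := hs.to_subtype
  refine .of_iff (fun n v => ?_)
    (exists_of_finite fun p : s => (eq_const i p.1.1).and (eq_const j p.1.2))
  simp

theorem add_one_eq : PrefixDefinable fun _ v => (v i : ℕ) + 1 = v j :=
  .of_iff (fun _ _ => add_one_eq_iff_of_isLowerSet_range isLowerSet_range_val)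
    ((lt i j).and (ex ((lt _ _).and (lt _ _))).not)

theorem rowf_eq_zero : PrefixDefinable fun _ v => rowf (v i) = 0 :=
  .of_iff (fun _ v => rowf_eq_zero_iff (v i)) (all ((eq_const _ 2).imp (ordc _ _)))

theorem col_lt : PrefixDefinable fun _ v => col (v i) < col (v j) :=
  .of_iff (fun _ v => col_lt_col_iff (v i) (v j))
    (ex ((rowf_eq_zero _).and ((lt _ _).and (lt _ _).not)))

theorem col_add_one_eq : PrefixDefinable fun _ v => col (v i) + 1 = col (v j) :=
  .of_iff (fun _ _ => add_one_eq_iff_of_isLowerSet_range isLowerSet_range_col)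
    ((col_lt i j).and (ex ((col_lt _ _).and (col_lt _ _))).not)

theorem rowf_lt : PrefixDefinable fun _ v => rowf (v i) < rowf (v j) :=
  .of_iff (fun _ v => rowf_lt_rowf_iff (v i) (v j))
    ((ordc i j).and ((col_lt i j).imp
      ((rowf_eq_zero j).not.and (ex ((add_one_eq _ _).and (ordc _ _))))))

theorem rowf_eq : PrefixDefinable fun _ v => rowf (v i) = rowf (v j) :=
  .of_iff (fun _ _ => by omega) ((rowf_lt i j).not.and (rowf_lt j i).not)

theorem rowf_eq_col : PrefixDefinable fun _ v => rowf (v i) = col (v i) :=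
  .of_iff (fun _ v => rowf_eq_col_iff (v i)) (ex ((col_lt _ _).and (rowf_eq _ _))).not

end Order

end PrefixDefinable

namespace RowBitDefinable

open UniformlyDefinable PrefixDefinable

theorem comp_col {f : ℕ → ℕ} (hf : ∀ c, f c < 2 ^ c)
    (h : ∀ ⦃α : Type⦄ (i : α),
      PrefixDefinable fun _ v => (f (col (v i) + 1)).testBit (rowf (v i))) :
    RowBitDefinable fun x => f (col x) := fun _ i j =>
  .of_iff (fun _ v => testBit_col_iff hf (v i) (v j))
    (ex ((col_add_one_eq _ _).and ((rowf_eq _ _).and (h _))))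

protected theorem col : RowBitDefinable col :=
  comp_col (f := fun c => c) (fun _ => Nat.lt_two_pow_self) fun _ i => cpred i

protected theorem qf : RowBitDefinable qf :=
  comp_col qseq_lt_two_pow fun _ i => qpred i

protected theorem rowf : RowBitDefinable rowf := fun _ i j =>
  .of_iff (fun _ v => testBit_rowf_iff (v i) (v j))
    (ex ((rowf_eq_col _).and ((rowf_eq _ _).and (RowBitDefinable.col _ _))))

protected theorem add {f g : ℕ → ℕ} (hf : RowBitDefinable f) (hg : RowBitDefinable g) :
    RowBitDefinable fun x => f x + g x := fun _ i j =>
  .of_iff (fun _ v => testBit_add_rowf_iff (f (v i)) (g (v i)) (v j))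
    (((hf i j).iff (hg i j)).iff (ex ((rowf_lt _ _).and (((hf _ _).and (hg _ _)).and
      (all ((rowf_lt _ _).imp ((rowf_lt _ _).imp ((hf _ _).or (hg _ _)))))))))

protected theorem id : RowBitDefinable fun x => x := by
  simpa only [qf_add_rowf] using RowBitDefinable.qf.add RowBitDefinable.rowf

end RowBitDefinable

open UniformlyDefinable PrefixDefinable in
theorem PrefixDefinable.testBit {α : Type} (i j : α) :
    PrefixDefinable fun _ v => (v i : ℕ).testBit (v j) := by
  have hsmall := mem_of_finite i j (finite_setOf_lt_and_testBit (qseq 4))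
  have hlarge : PrefixDefinable fun n v => ∃ d : Fin (n + 1), rowf d = col d ∧
      (∀ z : Fin (n + 1), (col d).testBit (rowf z) ↔ (v j : ℕ).testBit (rowf z)) ∧
      (v i : ℕ).testBit (rowf d) :=
    ex ((rowf_eq_col _).and ((all ((RowBitDefinable.col _ _).iff (RowBitDefinable.id _ _))).and
      (RowBitDefinable.id _ _)))
  refine .of_iff (fun n v => ?_) (hsmall.or ((const_le i (qseq 4)).and hlarge))
  rcases lt_or_ge (v i : ℕ) (qseq 4) with h | h
  · simp [h, h.not_ge]
  · simp [h, h.not_gt, testBit_iff_exists_diag h]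

/-- Theorem 3.1: there is an FO(<,◁,C,Q)-formula defining the `Bit`
predicate in every finite prefix structure `({0,...,n}, <, ◁, C, Q)`. -/
theorem lt_ordc_C_Q_define_Bit :
    ∃ φBit : L4.Formula (Fin 2),
      ∀ n : ℕ,
        letI := struct4 n
        ∀ a b : Fin (n + 1),
          φBit.Realize ![a, b] ↔ Nat.testBit (a : ℕ) (b : ℕ) = true := by
  obtain ⟨φ, hφ⟩ := PrefixDefinable.testBit (0 : Fin 2) 1
  exact ⟨φ, fun n a b => hφ n ![a, b]⟩
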